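/- For all integers 0 ≤ k₀ ≤ k and all χ_{k₀},…,χ_k ∈ 𝔛 with Pr(r̄(j)=χ_j for all k₀ ≤ j ≤ k) > 0, writing χ_k = (α_k,β_k,γ_k,δ_k), the following holds for every χ' = (α',β',γ',δ') ∈ 𝔛 with f(β') = 0: Pr(r̄(k+1)=χ' | r̄(j)=χ_j for all k₀ ≤ j ≤ k) = 𝟙(γ'=γ_k and ⌊δ'−δ_k−1⌋_T = 0) · P_{α_k α'} · Q_{β_k β'}. -/

import Mathlib

open MeasureTheory ProbabilityTheory Matrix

noncomputable section

/-- The state space `[N] × [M] × [N] × [T]` of the extended process `r̄`.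
`Fin N`, `Fin M`, `Fin T` play the roles of `[N] = {1,…,N}`, `[M]`, `[T]`
(with `Fin T` being the 0-indexed version of `[T] = {1,…,T}`, i.e. `δ ∈ [T]`
corresponds to `δ - 1 : Fin T`). -/
abbrev XT (NN MM T : ℕ) : Type := Fin NN × Fin MM × Fin NN × Fin T

/-- `X` is a time-homogeneous Markov chain with transition probability matrix `P`:
for every `k`, every state `j` and every sequence of states `i`,
`Pr(X(k+1) = j ∧ X(l) = i l for all l ≤ k) = P (i k) j * Pr(X(l) = i l for all l ≤ k)`. -/
def IsMarkovChain {Ω : Type} {_mΩ : MeasurableSpace Ω} (μ : Measure Ω) {S : Type}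
    (X : ℕ → Ω → S) (P : S → S → ℝ) : Prop :=
  ∀ (k : ℕ) (j : S) (i : ℕ → S),
    (μ {ω | X (k + 1) ω = j ∧ ∀ l ≤ k, X l ω = i l}).toReal
      = P (i k) j * (μ {ω | ∀ l ≤ k, X l ω = i l}).toReal

/-- `⌊m⌋_T`, the unique element of `{0,…,T-1}` congruent to `m` modulo `T`, as `Fin T`. -/
def intToFin (T : ℕ) [NeZero T] (a : ℤ) : Fin T :=
  ⟨(a % (T : ℤ)).toNat, by
    have hT : 0 < (T : ℤ) := by
      exact_mod_cast Nat.pos_of_ne_zero (NeZero.ne T)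
    have h1 : 0 ≤ a % (T : ℤ) := Int.emod_nonneg a (by omega)
    have h2 : a % (T : ℤ) < (T : ℤ) := Int.emod_lt_of_pos a hT
    omega⟩

-- `τ(k)`: the most recent observation time `≤ k` (i.e. the largest `j ≤ k` with
-- `f(s(j)) = 1`), or `τ₀` if no observation has occurred up to time `k` (`k < t₀`).
open Classical in
def tauZ {Ω : Type} {MM : ℕ} (s : ℕ → Ω → Fin MM) (f : Fin MM → Bool)
    (τ₀ : ℤ) (k : ℕ) (ω : Ω) : ℤ :=
  if ∃ j ≤ k, f (s j ω) = true
  then ((Nat.findGreatest (fun j => f (s j ω) = true) k : ℕ) : ℤ)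
  else τ₀

-- `σ(k) = r(τ(k))` if an observation occurred by time `k` (i.e. `k ≥ t₀`), else `σ₀`.
open Classical in
def sigmaProc {Ω : Type} {NN MM : ℕ} (r : ℕ → Ω → Fin NN) (s : ℕ → Ω → Fin MM)
    (f : Fin MM → Bool) (σ₀ : Fin NN) (k : ℕ) (ω : Ω) : Fin NN :=
  if ∃ j ≤ k, f (s j ω) = true
  then r (Nat.findGreatest (fun j => f (s j ω) = true) k) ω
  else σ₀

/-- `ρ(k) = ⌊k - τ(k)⌋_T + 1 ∈ [T]`, represented 0-indexed as `⌊k - τ(k)⌋_T : Fin T`. -/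
def rhoProc {Ω : Type} {MM T : ℕ} [NeZero T] (s : ℕ → Ω → Fin MM) (f : Fin MM → Bool)
    (τ₀ : ℤ) (k : ℕ) (ω : Ω) : Fin T :=
  intToFin T ((k : ℤ) - tauZ s f τ₀ k ω)

/-- The extended process `r̄(k) = (r(k), s(k), σ(k), ρ(k))`. -/
def rbarProc {Ω : Type} {NN MM T : ℕ} [NeZero T] (r : ℕ → Ω → Fin NN)
    (s : ℕ → Ω → Fin MM) (f : Fin MM → Bool) (τ₀ : ℤ) (σ₀ : Fin NN)
    (k : ℕ) (ω : Ω) : XT NN MM T :=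
  (r k ω, s k ω, sigmaProc r s f σ₀ k ω, rhoProc s f τ₀ k ω)

/-- Membership in `𝔛`: if `f(β) = 1` then `α = γ` and `δ = 1` (0-indexed: `δ = 0`). -/
def inX {NN MM T : ℕ} [NeZero T] (f : Fin MM → Bool) (χ : XT NN MM T) : Prop :=
  f χ.2.1 = true → χ.1 = χ.2.2.1 ∧ χ.2.2.2 = 0

/-- The transition probabilities `p̄_{χχ'}` of the extended chain. The condition
`⌊δ' - δ - 1⌋_T = 0` for `δ, δ' ∈ [T]` is, in 0-indexed form, `δ' = δ + 1` in `Fin T`. -/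
def pbar {NN MM T : ℕ} [NeZero T] (P : Matrix (Fin NN) (Fin NN) ℝ)
    (Q : Matrix (Fin MM) (Fin MM) ℝ) (f : Fin MM → Bool) (χ χ' : XT NN MM T) : ℝ :=
  (if f χ'.2.1 = true
    then (if χ'.1 = χ'.2.2.1 ∧ χ'.2.2.2 = 0 then (1 : ℝ) else 0)
    else (if χ'.2.2.1 = χ.2.2.1 ∧ χ'.2.2.2 = χ.2.2.2 + 1 then (1 : ℝ) else 0))
  * P χ.1 χ'.1 * Q χ.2.1 χ'.2.1

/-- The state trajectory of the closed-loop system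
`x(k+1) = A(mode(k)) x(k) + E(mode(k)) w(k)`, `x(0) = x₀`. -/
def traj {Ω S : Type} {n q : ℕ}
    (Amat : S → Matrix (Fin n) (Fin n) ℝ) (Emat : S → Matrix (Fin n) (Fin q) ℝ)
    (mode : ℕ → Ω → S) (w : ℕ → Ω → Fin q → ℝ) (x0 : Fin n → ℝ) : ℕ → Ω → Fin n → ℝ
  | 0, _ => x0
  | (k + 1), ω =>
      (Amat (mode k ω)).mulVec (traj Amat Emat mode w x0 k ω)
        + (Emat (mode k ω)).mulVec (w k ω)

/-- `A_{K,χ} = A_α + B_α K_{γ,δ}`. -/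
def AKmat {NN MM T n m : ℕ} (A : Fin NN → Matrix (Fin n) (Fin n) ℝ)
    (B : Fin NN → Matrix (Fin n) (Fin m) ℝ)
    (K : Fin NN → Fin T → Matrix (Fin m) (Fin n) ℝ) (χ : XT NN MM T) :
    Matrix (Fin n) (Fin n) ℝ :=
  A χ.1 + B χ.1 * K χ.2.2.1 χ.2.2.2

/-- `C_{K,χ} = C_α + D_α K_{γ,δ}`. -/
def CKmat {NN MM T n m ℓ : ℕ} (C : Fin NN → Matrix (Fin ℓ) (Fin n) ℝ)
    (D : Fin NN → Matrix (Fin ℓ) (Fin m) ℝ)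
    (K : Fin NN → Fin T → Matrix (Fin m) (Fin n) ℝ) (χ : XT NN MM T) :
    Matrix (Fin ℓ) (Fin n) ℝ :=
  C χ.1 + D χ.1 * K χ.2.2.1 χ.2.2.2

/-- Squared Euclidean norm of a vector, as an extended nonnegative real. -/
def sqE {d : ℕ} (v : Fin d → ℝ) : ENNReal := ENNReal.ofReal (∑ i, (v i) ^ 2)

-- The operator `D̄_χ(R) = ∑_{χ' ∈ 𝔛} p̄_{χ'χ} R_{χ'}`.
open Classical in
def Dop {NN MM T n : ℕ} [NeZero T] (P : Matrix (Fin NN) (Fin NN) ℝ)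
    (Q : Matrix (Fin MM) (Fin MM) ℝ) (f : Fin MM → Bool)
    (R : XT NN MM T → Matrix (Fin n) (Fin n) ℝ) (χ : XT NN MM T) :
    Matrix (Fin n) (Fin n) ℝ :=
  ∑ χ' : XT NN MM T, if inX f χ' then pbar P Q f χ' χ • R χ' else 0

-- The operator `F̄_χ(Z) = ∑_{χ' ∈ 𝔛} p̄_{χχ'} Z_{χ,χ'}`.
open Classical in
def Fop {NN MM T n : ℕ} [NeZero T] (P : Matrix (Fin NN) (Fin NN) ℝ)
    (Q : Matrix (Fin MM) (Fin MM) ℝ) (f : Fin MM → Bool)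
    (Z : XT NN MM T → XT NN MM T → Matrix (Fin n) (Fin n) ℝ) (χ : XT NN MM T) :
    Matrix (Fin n) (Fin n) ℝ :=
  ∑ χ' : XT NN MM T, if inX f χ' then pbar P Q f χ χ' • Z χ χ' else 0

/-- A pair `(γ,δ) ∈ [N] × [T]` is admissible if `(α,β,γ,δ) ∈ 𝔛` for some `α, β`. -/
def Admissible {NN MM T : ℕ} [NeZero T] (f : Fin MM → Bool) (g : Fin NN) (d : Fin T) : Prop :=
  ∃ (α : Fin NN) (β : Fin MM), inX (T := T) f (α, β, g, d)

/-- A realization, on some probability space, of the pair of independent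
time-homogeneous Markov chains `(r, s)` with transition matrices `P` and `Q`. -/
structure MJLSReal (NN MM : ℕ) (P : Matrix (Fin NN) (Fin NN) ℝ)
    (Q : Matrix (Fin MM) (Fin MM) ℝ) : Type 1 where
  Ω : Type
  inst : MeasurableSpace Ω
  μ : @Measure Ω inst
  prob : IsProbabilityMeasure μ
  r : ℕ → Ω → Fin NN
  s : ℕ → Ω → Fin MM
  meas_r : ∀ k, Measurable[inst] (r k)
  meas_s : ∀ k, Measurable[inst] (s k)
  markov_r : IsMarkovChain μ r fun i j => P i j
  markov_s : IsMarkovChain μ s fun i j => Q i j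
  indep : IndepFun (fun ω l => r l ω) (fun ω l => s l ω) μ

/-- A realization, on some probability space, of a time-homogeneous Markov chain `θ`
taking values in `𝔛` with transition probabilities `p̄`. -/
structure ThetaReal (NN MM T : ℕ) [NeZero T] (P : Matrix (Fin NN) (Fin NN) ℝ)
    (Q : Matrix (Fin MM) (Fin MM) ℝ) (f : Fin MM → Bool) : Type 1 where
  Ω : Type
  inst : MeasurableSpace Ω
  μ : @Measure Ω inst
  prob : IsProbabilityMeasure μ
  θ : ℕ → Ω → XT NN MM T
  meas : ∀ k, Measurable[inst] (θ k)
  mem : ∀ k ω, inX f (θ k ω)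
  markov : IsMarkovChain μ θ (pbar P Q f)

/-- Mean square stability of the closed-loop system `Σ_K`: there are `c > 0` and
`λ ∈ [0,1)` such that for every realization, every deterministic initialization
(`r(0) = r₀`, `s(0) = s₀` a.s., together with `σ₀` and `τ₀ ≤ 0`, so that `r̄(0)`
is a deterministic element of `𝔛`), every `x₀` and every `k`,
`E[‖x(k)‖²] ≤ c λ^k ‖x₀‖²` (with `w ≡ 0`). -/
def MeanSquareStable {NN MM T n m q : ℕ} [NeZero T]
    (P : Matrix (Fin NN) (Fin NN) ℝ) (Qm : Matrix (Fin MM) (Fin MM) ℝ) (f : Fin MM → Bool)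
    (A : Fin NN → Matrix (Fin n) (Fin n) ℝ) (B : Fin NN → Matrix (Fin n) (Fin m) ℝ)
    (E : Fin NN → Matrix (Fin n) (Fin q) ℝ)
    (K : Fin NN → Fin T → Matrix (Fin m) (Fin n) ℝ) : Prop :=
  ∃ c : ℝ, 0 < c ∧ ∃ lam : ℝ, 0 ≤ lam ∧ lam < 1 ∧
    ∀ (S : MJLSReal NN MM P Qm) (τ₀ : ℤ), τ₀ ≤ 0 →
      ∀ (σ₀ r₀ : Fin NN) (s₀ : Fin MM),
        (∀ᵐ ω ∂S.μ, S.r 0 ω = r₀ ∧ S.s 0 ω = s₀) →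
        ∀ (x0 : Fin n → ℝ) (k : ℕ),
          (∫⁻ ω, sqE (traj (AKmat A B K) (fun χ => E χ.1)
              (rbarProc S.r S.s f τ₀ σ₀) (fun _ _ => 0) x0 k ω) ∂S.μ)
            ≤ ENNReal.ofReal (c * lam ^ k * ∑ i, (x0 i) ^ 2)

/-- Mean square stability of `Σ̄_K` (the system driven by the chain `θ`). -/
def MeanSquareStableBar {NN MM T n m q : ℕ} [NeZero T]
    (P : Matrix (Fin NN) (Fin NN) ℝ) (Qm : Matrix (Fin MM) (Fin MM) ℝ) (f : Fin MM → Bool)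
    (A : Fin NN → Matrix (Fin n) (Fin n) ℝ) (B : Fin NN → Matrix (Fin n) (Fin m) ℝ)
    (E : Fin NN → Matrix (Fin n) (Fin q) ℝ)
    (K : Fin NN → Fin T → Matrix (Fin m) (Fin n) ℝ) : Prop :=
  ∃ c : ℝ, 0 < c ∧ ∃ lam : ℝ, 0 ≤ lam ∧ lam < 1 ∧
    ∀ (S : ThetaReal NN MM T P Qm f) (χ : XT NN MM T), inX f χ →
      (∀ᵐ ω ∂S.μ, S.θ 0 ω = χ) →
      ∀ (x0 : Fin n → ℝ) (k : ℕ),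
        (∫⁻ ω, sqE (traj (AKmat A B K) (fun χ' => E χ'.1) S.θ (fun _ _ => 0) x0 k ω) ∂S.μ)
          ≤ ENNReal.ofReal (c * lam ^ k * ∑ i, (x0 i) ^ 2)

/-- The impulse disturbance `w = e_i φ`, i.e. `w(0) = e_i` and `w(k) = 0` for `k ≥ 1`. -/
def impulse {Ω : Type} (q : ℕ) (i : Fin q) : ℕ → Ω → Fin q → ℝ :=
  fun k _ j => if k = 0 ∧ j = i then 1 else 0

/-- `∑_k E[‖z(k; 0, χ, e_i φ)‖²]` for `Σ_K` on a given realization with data `(τ₀, σ₀)`. -/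
def H2TermSigma {NN MM T n m q ℓ : ℕ} [NeZero T]
    {P : Matrix (Fin NN) (Fin NN) ℝ} {Qm : Matrix (Fin MM) (Fin MM) ℝ}
    (S : MJLSReal NN MM P Qm) (f : Fin MM → Bool) (τ₀ : ℤ) (σ₀ : Fin NN)
    (A : Fin NN → Matrix (Fin n) (Fin n) ℝ) (B : Fin NN → Matrix (Fin n) (Fin m) ℝ)
    (C : Fin NN → Matrix (Fin ℓ) (Fin n) ℝ) (D : Fin NN → Matrix (Fin ℓ) (Fin m) ℝ)
    (E : Fin NN → Matrix (Fin n) (Fin q) ℝ)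
    (K : Fin NN → Fin T → Matrix (Fin m) (Fin n) ℝ) (i : Fin q) : ENNReal :=
  ∑' k : ℕ, ∫⁻ ω, sqE ((CKmat C D K (rbarProc S.r S.s f τ₀ σ₀ k ω)).mulVec
      (traj (AKmat A B K) (fun χ => E χ.1) (rbarProc S.r S.s f τ₀ σ₀)
        (impulse q i) 0 k ω)) ∂S.μ

-- `‖Σ_K‖₂² < γ`, where `‖Σ_K‖₂² = ∑_{i=1}^q ∑_{χ ∈ 𝔛} μ̄(χ) ‖z(⬝;0,χ,e_iφ)‖₂²` and the
-- expectations are over arbitrary realizations with deterministic initialization `r̄(0) = χ`.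
open Classical in
def H2SqLtSigma {NN MM T n m q ℓ : ℕ} [NeZero T]
    (P : Matrix (Fin NN) (Fin NN) ℝ) (Qm : Matrix (Fin MM) (Fin MM) ℝ) (f : Fin MM → Bool)
    (A : Fin NN → Matrix (Fin n) (Fin n) ℝ) (B : Fin NN → Matrix (Fin n) (Fin m) ℝ)
    (C : Fin NN → Matrix (Fin ℓ) (Fin n) ℝ) (D : Fin NN → Matrix (Fin ℓ) (Fin m) ℝ)
    (E : Fin NN → Matrix (Fin n) (Fin q) ℝ)
    (K : Fin NN → Fin T → Matrix (Fin m) (Fin n) ℝ)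
    (μbar : XT NN MM T → ℝ) (γ : ℝ) : Prop :=
  ∀ (S : Fin q → XT NN MM T → MJLSReal NN MM P Qm)
    (τ : Fin q → XT NN MM T → ℤ) (σv : Fin q → XT NN MM T → Fin NN),
    (∀ i χ, inX f χ → τ i χ ≤ 0 ∧
        (∀ᵐ ω ∂(S i χ).μ, rbarProc (S i χ).r (S i χ).s f (τ i χ) (σv i χ) 0 ω = χ)) →
    (∑ i : Fin q, ∑ χ : XT NN MM T,
        if inX f χ
        then ENNReal.ofReal (μbar χ) * H2TermSigma (S i χ) f (τ i χ) (σv i χ) A B C D E K i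
        else 0)
      < ENNReal.ofReal γ

/-- `∑_k E[‖z̄(k; 0, χ, e_i φ)‖²]` for `Σ̄_K` on a given realization of `θ`. -/
def H2TermBar {NN MM T n m q ℓ : ℕ} [NeZero T]
    {P : Matrix (Fin NN) (Fin NN) ℝ} {Qm : Matrix (Fin MM) (Fin MM) ℝ} {f : Fin MM → Bool}
    (S : ThetaReal NN MM T P Qm f)
    (A : Fin NN → Matrix (Fin n) (Fin n) ℝ) (B : Fin NN → Matrix (Fin n) (Fin m) ℝ)
    (C : Fin NN → Matrix (Fin ℓ) (Fin n) ℝ) (D : Fin NN → Matrix (Fin ℓ) (Fin m) ℝ)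
    (E : Fin NN → Matrix (Fin n) (Fin q) ℝ)
    (K : Fin NN → Fin T → Matrix (Fin m) (Fin n) ℝ) (i : Fin q) : ENNReal :=
  ∑' k : ℕ, ∫⁻ ω, sqE ((CKmat C D K (S.θ k ω)).mulVec
      (traj (AKmat A B K) (fun χ => E χ.1) S.θ (impulse q i) 0 k ω)) ∂S.μ

-- `‖Σ̄_K‖₂² < γ` (the `H₂` norm of `Σ̄_K`, defined with `θ` in place of `r̄`).
open Classical in
def H2SqLtBar {NN MM T n m q ℓ : ℕ} [NeZero T]
    (P : Matrix (Fin NN) (Fin NN) ℝ) (Qm : Matrix (Fin MM) (Fin MM) ℝ) (f : Fin MM → Bool)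
    (A : Fin NN → Matrix (Fin n) (Fin n) ℝ) (B : Fin NN → Matrix (Fin n) (Fin m) ℝ)
    (C : Fin NN → Matrix (Fin ℓ) (Fin n) ℝ) (D : Fin NN → Matrix (Fin ℓ) (Fin m) ℝ)
    (E : Fin NN → Matrix (Fin n) (Fin q) ℝ)
    (K : Fin NN → Fin T → Matrix (Fin m) (Fin n) ℝ)
    (μbar : XT NN MM T → ℝ) (γ : ℝ) : Prop :=
  ∀ (S : Fin q → XT NN MM T → ThetaReal NN MM T P Qm f),
    (∀ i χ, inX f χ → (∀ᵐ ω ∂(S i χ).μ, (S i χ).θ 0 ω = χ)) →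
    (∑ i : Fin q, ∑ χ : XT NN MM T,
        if inX f χ
        then ENNReal.ofReal (μbar χ) * H2TermBar (S i χ) A B C D E K i
        else 0)
      < ENNReal.ofReal γ

/-- The σ-algebra `Θ_k` generated by `r(0), s(0), …, r(k), s(k)`, for a realization. -/
def sigFiltSigma {NN MM : ℕ} {P : Matrix (Fin NN) (Fin NN) ℝ}
    {Q : Matrix (Fin MM) (Fin MM) ℝ} (S : MJLSReal NN MM P Q) (k : ℕ) :
    MeasurableSpace S.Ω :=
  ⨆ j ∈ Finset.range (k + 1),
    (MeasurableSpace.comap (S.r j) inferInstance ⊔ MeasurableSpace.comap (S.s j) inferInstance)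

/-- The σ-algebra generated by `θ(0), …, θ(k)`, for a realization of `θ`. -/
def sigFiltBar {NN MM T : ℕ} [NeZero T] {P : Matrix (Fin NN) (Fin NN) ℝ}
    {Q : Matrix (Fin MM) (Fin MM) ℝ} {f : Fin MM → Bool} (S : ThetaReal NN MM T P Q f)
    (k : ℕ) : MeasurableSpace S.Ω :=
  ⨆ j ∈ Finset.range (k + 1), MeasurableSpace.comap (S.θ j) inferInstance

/-- `Σ_K` satisfies `‖Σ_K‖∞² < γ`: there is `0 ≤ c < γ` such that `‖z‖₂² ≤ c ‖w‖₂²`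
for every realization, every deterministic initialization `r̄(0) = r̄₀ ∈ 𝔛`, and
every nonzero `w ∈ ℓ²(ℝ^q)` adapted to `(Θ_k)_k` (with `x₀ = 0`). -/
def HinfSqLtSigma {NN MM T n m q ℓ : ℕ} [NeZero T]
    (P : Matrix (Fin NN) (Fin NN) ℝ) (Qm : Matrix (Fin MM) (Fin MM) ℝ) (f : Fin MM → Bool)
    (A : Fin NN → Matrix (Fin n) (Fin n) ℝ) (B : Fin NN → Matrix (Fin n) (Fin m) ℝ)
    (C : Fin NN → Matrix (Fin ℓ) (Fin n) ℝ) (D : Fin NN → Matrix (Fin ℓ) (Fin m) ℝ)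
    (E : Fin NN → Matrix (Fin n) (Fin q) ℝ)
    (K : Fin NN → Fin T → Matrix (Fin m) (Fin n) ℝ) (γ : ℝ) : Prop :=
  ∃ c : ℝ, 0 ≤ c ∧ c < γ ∧
    ∀ (S : MJLSReal NN MM P Qm) (τ₀ : ℤ), τ₀ ≤ 0 → ∀ (σ₀ : Fin NN) (χ : XT NN MM T),
      inX f χ → (∀ᵐ ω ∂S.μ, rbarProc S.r S.s f τ₀ σ₀ 0 ω = χ) →
      ∀ (w : ℕ → S.Ω → Fin q → ℝ),
        (∀ k, Measurable[sigFiltSigma S k] (w k)) →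
        0 < (∑' k : ℕ, ∫⁻ ω, sqE (w k ω) ∂S.μ) →
        (∑' k : ℕ, ∫⁻ ω, sqE (w k ω) ∂S.μ) ≠ ⊤ →
        (∑' k : ℕ, ∫⁻ ω, sqE ((CKmat C D K (rbarProc S.r S.s f τ₀ σ₀ k ω)).mulVec
            (traj (AKmat A B K) (fun χ' => E χ'.1) (rbarProc S.r S.s f τ₀ σ₀) w 0 k ω)) ∂S.μ)
          ≤ ENNReal.ofReal c * (∑' k : ℕ, ∫⁻ ω, sqE (w k ω) ∂S.μ)

/-- `Σ̄_K` satisfies `‖Σ̄_K‖∞² < γ` (disturbances adapted to the filtration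
generated by `θ`). -/
def HinfSqLtBar {NN MM T n m q ℓ : ℕ} [NeZero T]
    (P : Matrix (Fin NN) (Fin NN) ℝ) (Qm : Matrix (Fin MM) (Fin MM) ℝ) (f : Fin MM → Bool)
    (A : Fin NN → Matrix (Fin n) (Fin n) ℝ) (B : Fin NN → Matrix (Fin n) (Fin m) ℝ)
    (C : Fin NN → Matrix (Fin ℓ) (Fin n) ℝ) (D : Fin NN → Matrix (Fin ℓ) (Fin m) ℝ)
    (E : Fin NN → Matrix (Fin n) (Fin q) ℝ)
    (K : Fin NN → Fin T → Matrix (Fin m) (Fin n) ℝ) (γ : ℝ) : Prop :=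
  ∃ c : ℝ, 0 ≤ c ∧ c < γ ∧
    ∀ (S : ThetaReal NN MM T P Qm f) (χ : XT NN MM T),
      inX f χ → (∀ᵐ ω ∂S.μ, S.θ 0 ω = χ) →
      ∀ (w : ℕ → S.Ω → Fin q → ℝ),
        (∀ k, Measurable[sigFiltBar S k] (w k)) →
        0 < (∑' k : ℕ, ∫⁻ ω, sqE (w k ω) ∂S.μ) →
        (∑' k : ℕ, ∫⁻ ω, sqE (w k ω) ∂S.μ) ≠ ⊤ →
        (∑' k : ℕ, ∫⁻ ω, sqE ((CKmat C D K (S.θ k ω)).mulVec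
            (traj (AKmat A B K) (fun χ' => E χ'.1) S.θ w 0 k ω)) ∂S.μ)
          ≤ ENNReal.ofReal c * (∑' k : ℕ, ∫⁻ ω, sqE (w k ω) ∂S.μ)

/-- The symmetric 4×4 block matrix appearing in the `H∞` LMI, with diagonal blocks
`D1, γ I_q, D3, I_ℓ`, sub-diagonal blocks `(3,1) = B31`, `(3,2) = B32`, `(4,1) = B41`,
the corresponding transposed blocks above the diagonal, and zeros elsewhere. -/
def hinfBlock {n q ℓ : ℕ} (γ : ℝ) (D1 D3 : Matrix (Fin n) (Fin n) ℝ)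
    (B31 : Matrix (Fin n) (Fin n) ℝ) (B32 : Matrix (Fin n) (Fin q) ℝ)
    (B41 : Matrix (Fin ℓ) (Fin n) ℝ) :
    Matrix ((Fin n ⊕ Fin q) ⊕ (Fin n ⊕ Fin ℓ)) ((Fin n ⊕ Fin q) ⊕ (Fin n ⊕ Fin ℓ)) ℝ :=
  Matrix.fromBlocks
    (Matrix.fromBlocks D1 0 0 (γ • (1 : Matrix (Fin q) (Fin q) ℝ)))
    (Matrix.fromBlocks B31ᵀ B41ᵀ B32ᵀ 0)
    (Matrix.fromBlocks B31 B32 B41 0)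
    (Matrix.fromBlocks D3 0 0 (1 : Matrix (Fin ℓ) (Fin ℓ) ℝ))

theorem aux_tau_succ {Ω : Type} {MM : ℕ} (s : ℕ → Ω → Fin MM) (f : Fin MM → Bool)
    (τ₀ : ℤ) (k : ℕ) (ω : Ω) :
    tauZ s f τ₀ (k + 1) ω = if f (s (k + 1) ω) = true then ((k + 1 : ℕ) : ℤ)
      else tauZ s f τ₀ k ω := by
  unfold tauZ
  by_cases h : f (s (k + 1) ω) = true
  · have : ∃ j ≤ k + 1, f (s j ω) = true := ⟨k + 1, le_rfl, h⟩
    rw [if_pos this, if_pos h, Nat.findGreatest_succ, if_pos h]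
  · have : (∃ j ≤ k + 1, f (s j ω) = true) ↔ ∃ j ≤ k, f (s j ω) = true := by
      constructor
      · rintro ⟨j, hj, hf⟩
        rcases Nat.le_succ_iff.1 hj with h1 | h1
        · exact ⟨j, h1, hf⟩
        · subst h1; exact absurd hf h
      · rintro ⟨j, hj, hf⟩
        exact ⟨j, by omega, hf⟩
    rw [if_neg h, Nat.findGreatest_succ, if_neg h]
    simp only [this]

theorem aux_sigma_succ {Ω : Type} {NN MM : ℕ} (r : ℕ → Ω → Fin NN) (s : ℕ → Ω → Fin MM)
    (f : Fin MM → Bool) (σ₀ : Fin NN) (k : ℕ) (ω : Ω) :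
    sigmaProc r s f σ₀ (k + 1) ω = if f (s (k + 1) ω) = true then r (k + 1) ω
      else sigmaProc r s f σ₀ k ω := by
  unfold sigmaProc
  by_cases h : f (s (k + 1) ω) = true
  · have : ∃ j ≤ k + 1, f (s j ω) = true := ⟨k + 1, le_rfl, h⟩
    rw [if_pos this, if_pos h, Nat.findGreatest_succ, if_pos h]
  · have : (∃ j ≤ k + 1, f (s j ω) = true) ↔ ∃ j ≤ k, f (s j ω) = true := by
      constructor
      · rintro ⟨j, hj, hf⟩
        rcases Nat.le_succ_iff.1 hj with h1 | h1
        · exact ⟨j, h1, hf⟩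
        · subst h1; exact absurd hf h
      · rintro ⟨j, hj, hf⟩
        exact ⟨j, by omega, hf⟩
    rw [if_neg h, Nat.findGreatest_succ, if_neg h]
    simp only [this]

theorem aux_tau_congr {Ω : Type} {MM : ℕ} (s : ℕ → Ω → Fin MM) (f : Fin MM → Bool)
    (τ₀ : ℤ) (k : ℕ) (ω ω' : Ω) (h : ∀ l ≤ k, s l ω = s l ω') :
    tauZ s f τ₀ k ω = tauZ s f τ₀ k ω' := by
  induction k with
  | zero => simp [tauZ, h 0 le_rfl]
  | succ k ih =>
    rw [aux_tau_succ, aux_tau_succ, h _ le_rfl, ih fun l hl => h l (by omega)]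

theorem aux_sigma_congr {Ω : Type} {NN MM : ℕ} (r : ℕ → Ω → Fin NN) (s : ℕ → Ω → Fin MM)
    (f : Fin MM → Bool) (σ₀ : Fin NN) (k : ℕ) (ω ω' : Ω) (hr : ∀ l ≤ k, r l ω = r l ω')
    (h : ∀ l ≤ k, s l ω = s l ω') :
    sigmaProc r s f σ₀ k ω = sigmaProc r s f σ₀ k ω' := by
  induction k with
  | zero => simp [sigmaProc, h 0 le_rfl, hr 0 le_rfl]
  | succ k ih =>
    rw [aux_sigma_succ, aux_sigma_succ, h _ le_rfl, hr _ le_rfl,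
      ih (fun l hl => hr l (by omega)) fun l hl => h l (by omega)]

theorem aux_rbar_congr {Ω : Type} {NN MM T : ℕ} [NeZero T] (r : ℕ → Ω → Fin NN)
    (s : ℕ → Ω → Fin MM) (f : Fin MM → Bool) (τ₀ : ℤ) (σ₀ : Fin NN)
    (k : ℕ) (ω ω' : Ω) (hr : ∀ l ≤ k, r l ω = r l ω')
    (h : ∀ l ≤ k, s l ω = s l ω') :
    (rbarProc r s f τ₀ σ₀ k ω : XT NN MM T) = rbarProc r s f τ₀ σ₀ k ω' := by
  unfold rbarProc rhoProc
  rw [aux_sigma_congr r s f σ₀ k ω ω' hr h, aux_tau_congr s f τ₀ k ω ω' h, hr k le_rfl,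
    h k le_rfl]

theorem aux_intToFin_succ (T : ℕ) [NeZero T] (a : ℤ) :
    intToFin T (a + 1) = intToFin T a + 1 := by
  have hT : 0 < (T : ℤ) := by
    exact_mod_cast Nat.pos_of_ne_zero (NeZero.ne T)
  have h1 : 0 ≤ a % (T : ℤ) := Int.emod_nonneg a (by omega)
  have h2 : 0 ≤ (a + 1) % (T : ℤ) := Int.emod_nonneg _ (by omega)
  apply Fin.ext
  rw [Fin.val_add, Fin.val_one']
  zify
  simp only [intToFin, Int.toNat_of_nonneg h1, Int.toNat_of_nonneg h2]
  simp

theorem aux_markov {Ω : Type} [MeasurableSpace Ω] (μ : Measure Ω) [IsProbabilityMeasure μ]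
    {NN MM : ℕ} (P : Matrix (Fin NN) (Fin NN) ℝ) (Q : Matrix (Fin MM) (Fin MM) ℝ)
    (r : ℕ → Ω → Fin NN) (s : ℕ → Ω → Fin MM)
    (hmr : ∀ k, Measurable (r k)) (hms : ∀ k, Measurable (s k))
    (hr : IsMarkovChain μ r fun i j => P i j) (hs : IsMarkovChain μ s fun i j => Q i j)
    (hind : IndepFun (fun ω l => r l ω) (fun ω l => s l ω) μ)
    (k : ℕ) (A : Set Ω) (a a' : Fin NN) (b b' : Fin MM)
    (hA : ∀ ω ω', (∀ l ≤ k, r l ω = r l ω') → (∀ l ≤ k, s l ω = s l ω') → ω ∈ A → ω' ∈ A)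
    (hAa : ∀ ω ∈ A, r k ω = a ∧ s k ω = b) :
    μ.real ({ω | r (k + 1) ω = a' ∧ s (k + 1) ω = b'} ∩ A) = P a a' * Q b b' * μ.real A := by
  classical
  let H : Ω → (Fin (k + 1) → Fin NN) × (Fin (k + 1) → Fin MM) :=
    fun ω => (fun l => r l ω, fun l => s l ω)
  have hH : Measurable H :=
    (measurable_pi_lambda _ fun l : Fin (k + 1) => hmr l).prodMk
      (measurable_pi_lambda _ fun l : Fin (k + 1) => hms l)
  let S : Finset ((Fin (k + 1) → Fin NN) × (Fin (k + 1) → Fin MM)) :=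
    Finset.univ.filter fun h => h ∈ H '' A
  have hAS : A = H ⁻¹' (S : Set _) := by
    ext ω
    simp only [S, Finset.coe_filter, Finset.mem_univ, true_and, Set.mem_preimage,
      Set.mem_setOf_eq]
    constructor
    · intro h; exact ⟨ω, h, rfl⟩
    · rintro ⟨ω', h', he⟩
      refine hA ω' ω ?_ ?_ h'
      · intro l hl
        exact congrFun (congrArg Prod.fst he) ⟨l, by omega⟩
      · intro l hl
        exact congrFun (congrArg Prod.snd he) ⟨l, by omega⟩
  set B : Set Ω := {ω | r (k + 1) ω = a' ∧ s (k + 1) ω = b'} with hB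
  have hBm : MeasurableSet B :=
    (hmr (k + 1) (measurableSet_singleton a')).inter (hms (k + 1) (measurableSet_singleton b'))
  have hAm : MeasurableSet A := by rw [hAS]; exact hH S.measurableSet
  have e1 : μ.real A = ∑ h ∈ S, μ.real (H ⁻¹' {h}) := by
    rw [sum_measureReal_preimage_singleton S (fun y _ => hH (measurableSet_singleton y)), ← hAS]
  have e2 : μ.real (B ∩ A) = ∑ h ∈ S, μ.real (B ∩ H ⁻¹' {h}) := by
    have := sum_measureReal_preimage_singleton (μ := μ.restrict B) S
      (fun y _ => hH (measurableSet_singleton y))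
    rw [← hAS, measureReal_restrict_apply hAm] at this
    rw [Set.inter_comm, ← this]
    refine Finset.sum_congr rfl fun h _ => ?_
    rw [measureReal_restrict_apply (hH (measurableSet_singleton h)), Set.inter_comm]
  rw [e1, e2, Finset.mul_sum]
  refine Finset.sum_congr rfl fun h hh => ?_
  obtain ⟨ω₀, hω₀, rfl⟩ : h ∈ H '' A := by simpa [S] using hh
  obtain ⟨ha, hb⟩ := hAa ω₀ hω₀
  have mC : ∀ {K : ℕ} (i : ℕ → Fin K), MeasurableSet {x : ℕ → Fin K | ∀ l ≤ k, x l = i l} := by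
    intro K i
    have : {x : ℕ → Fin K | ∀ l ≤ k, x l = i l} = ⋂ l, ⋂ (_ : l ≤ k), {x | x l = i l} := by
      ext; simp
    rw [this]
    exact MeasurableSet.iInter fun l => MeasurableSet.iInter fun _ =>
      (measurable_pi_apply l) (measurableSet_singleton _)
  have mD : ∀ {K : ℕ} (j : Fin K) (i : ℕ → Fin K),
      MeasurableSet {x : ℕ → Fin K | x (k + 1) = j ∧ ∀ l ≤ k, x l = i l} := by
    intro K j i
    exact ((measurable_pi_apply (k + 1)) (measurableSet_singleton j)).inter (mC i)
  have i1 := hind.measure_inter_preimage_eq_mul _ _ (mC fun l => r l ω₀) (mC fun l => s l ω₀)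
  have i2 := hind.measure_inter_preimage_eq_mul _ _ (mD a' fun l => r l ω₀)
    (mD b' fun l => s l ω₀)
  have s1 : H ⁻¹' {H ω₀} = {ω | ∀ l ≤ k, r l ω = r l ω₀} ∩ {ω | ∀ l ≤ k, s l ω = s l ω₀} := by
    ext ω
    simp only [H, Set.mem_preimage, Set.mem_singleton_iff, Prod.mk.injEq, funext_iff,
      Fin.forall_iff, Set.mem_inter_iff, Set.mem_setOf_eq, Nat.lt_succ_iff]
  have s2 : B ∩ H ⁻¹' {H ω₀} = {ω | r (k + 1) ω = a' ∧ ∀ l ≤ k, r l ω = r l ω₀} ∩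
      {ω | s (k + 1) ω = b' ∧ ∀ l ≤ k, s l ω = s l ω₀} := by
    rw [s1]; ext ω; simp only [hB, Set.mem_inter_iff, Set.mem_setOf_eq]; tauto
  have m1 := hr k a' (fun l => r l ω₀)
  have m2 := hs k b' (fun l => s l ω₀)
  simp only [ha, hb] at m1 m2
  rw [s2, s1]
  simp only [Set.preimage_setOf_eq] at i1 i2
  rw [measureReal_def, measureReal_def, i1, i2, ENNReal.toReal_mul, ENNReal.toReal_mul, m1, m2]
  ring

/-- the conditional transition probabilities of `r̄` at a state `χ'`
with `f(β') = 0`.  (In 0-indexed form, `⌊δ' - δ_k - 1⌋_T = 0` reads `δ' = δ_k + 1`.) -/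
theorem rbar_transition_unobserved
    {Ω : Type} [MeasurableSpace Ω] (μ : Measure Ω) [IsProbabilityMeasure μ]
    {NN MM T : ℕ} [NeZero NN] [NeZero MM] [NeZero T]
    (P : Matrix (Fin NN) (Fin NN) ℝ) (Q : Matrix (Fin MM) (Fin MM) ℝ)
    (hP0 : ∀ i j, 0 ≤ P i j) (hP1 : ∀ i, ∑ j, P i j = 1)
    (hQ0 : ∀ i j, 0 ≤ Q i j) (hQ1 : ∀ i, ∑ j, Q i j = 1)
    (r : ℕ → Ω → Fin NN) (s : ℕ → Ω → Fin MM)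
    (hmr : ∀ k, Measurable (r k)) (hms : ∀ k, Measurable (s k))
    (hr : IsMarkovChain μ r fun i j => P i j) (hs : IsMarkovChain μ s fun i j => Q i j)
    (hind : IndepFun (fun ω l => r l ω) (fun ω l => s l ω) μ)
    (f : Fin MM → Bool) (τ₀ : ℤ) (hτ₀ : τ₀ ≤ 0) (σ₀ : Fin NN)
    (k₀ k : ℕ) (hk : k₀ ≤ k)
    (χ : ℕ → XT NN MM T) (hχ : ∀ j, k₀ ≤ j → j ≤ k → inX f (χ j))
    (χ' : XT NN MM T) (hχ' : inX f χ') (hf : f χ'.2.1 = false)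
    (hpos : 0 < (μ {ω | ∀ j, k₀ ≤ j → j ≤ k → rbarProc r s f τ₀ σ₀ j ω = χ j}).toReal) :
    (μ ({ω | rbarProc r s f τ₀ σ₀ (k + 1) ω = χ'}
        ∩ {ω | ∀ j, k₀ ≤ j → j ≤ k → rbarProc r s f τ₀ σ₀ j ω = χ j})).toReal
      / (μ {ω | ∀ j, k₀ ≤ j → j ≤ k → rbarProc r s f τ₀ σ₀ j ω = χ j}).toReal
      = (if χ'.2.2.1 = (χ k).2.2.1 ∧ χ'.2.2.2 = (χ k).2.2.2 + 1 then (1 : ℝ) else 0)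
          * P (χ k).1 χ'.1 * Q (χ k).2.1 χ'.2.1 := by
  have hneq := hpos.ne'
  rw [div_eq_iff hneq]
  set A : Set Ω := {ω | ∀ j, k₀ ≤ j → j ≤ k → rbarProc r s f τ₀ σ₀ j ω = χ j} with hAdef
  have key := aux_markov μ P Q r s hmr hms hr hs hind k A (χ k).1 χ'.1 (χ k).2.1 χ'.2.1
    (by
      intro ω ω' h1 h2 hω j hj hjk
      rw [← hω j hj hjk]
      exact (aux_rbar_congr r s f τ₀ σ₀ j ω ω' (fun l hl => h1 l (by omega))
        (fun l hl => h2 l (by omega))).symm)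
    (by
      intro ω hω
      have := hω k hk le_rfl
      rw [← this]
      exact ⟨rfl, rfl⟩)
  have step : ∀ ω ∈ A, (rbarProc r s f τ₀ σ₀ (k + 1) ω = χ' ↔
      (r (k + 1) ω = χ'.1 ∧ s (k + 1) ω = χ'.2.1) ∧
        (χ'.2.2.1 = (χ k).2.2.1 ∧ χ'.2.2.2 = (χ k).2.2.2 + 1)) := by
    intro ω hω
    have h0 := hω k hk le_rfl
    have hs1 : (χ k).2.2.1 = sigmaProc r s f σ₀ k ω := by rw [← h0]; rfl
    have hs2 : (χ k).2.2.2 = rhoProc s f τ₀ k ω := by rw [← h0]; rfl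
    have main : s (k + 1) ω = χ'.2.1 → sigmaProc r s f σ₀ (k + 1) ω = (χ k).2.2.1 ∧
        (rhoProc s f τ₀ (k + 1) ω : Fin T) = (χ k).2.2.2 + 1 := by
      intro hss
      have hff : ¬ f (s (k + 1) ω) = true := by rw [hss, hf]; simp
      constructor
      · rw [aux_sigma_succ, if_neg hff, hs1]
      · rw [hs2]
        unfold rhoProc
        rw [aux_tau_succ, if_neg hff, ← aux_intToFin_succ]
        congr 1
        push_cast
        ring
    constructor
    · intro h
      have e1 : r (k + 1) ω = χ'.1 := congrArg (fun x => x.1) h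
      have e2 : s (k + 1) ω = χ'.2.1 := congrArg (fun x => x.2.1) h
      have e3 : sigmaProc r s f σ₀ (k + 1) ω = χ'.2.2.1 := congrArg (fun x => x.2.2.1) h
      have e4 : rhoProc s f τ₀ (k + 1) ω = χ'.2.2.2 := congrArg (fun x => x.2.2.2) h
      obtain ⟨g1, g2⟩ := main e2
      exact ⟨⟨e1, e2⟩, e3.symm.trans g1, e4.symm.trans g2⟩
    · rintro ⟨⟨e1, e2⟩, e3, e4⟩
      obtain ⟨g1, g2⟩ := main e2
      exact Prod.ext e1 (Prod.ext e2 (Prod.ext (g1.trans e3.symm) (g2.trans e4.symm)))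
  by_cases hc : χ'.2.2.1 = (χ k).2.2.1 ∧ χ'.2.2.2 = (χ k).2.2.2 + 1
  · rw [if_pos hc, one_mul]
    have hset : {ω | rbarProc r s f τ₀ σ₀ (k + 1) ω = χ'} ∩ A =
        {ω | r (k + 1) ω = χ'.1 ∧ s (k + 1) ω = χ'.2.1} ∩ A := by
      ext ω
      constructor
      · rintro ⟨h1, h2⟩
        exact ⟨((step ω h2).1 h1).1, h2⟩
      · rintro ⟨h1, h2⟩
        exact ⟨(step ω h2).2 ⟨h1, hc⟩, h2⟩
    rw [hset]
    exact key
  · rw [if_neg hc]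
    have hset : {ω | rbarProc r s f τ₀ σ₀ (k + 1) ω = χ'} ∩ A = ∅ := by
      ext ω
      simp only [Set.mem_inter_iff, Set.mem_setOf_eq, Set.mem_empty_iff_false, iff_false,
        not_and]
      intro h1 h2
      exact hc ((step ω h2).1 h1).2
    rw [hset]
    simp

end
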